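/- Fix n ≥ 2, a constant k > 0, a continuous non-increasing function p : [0,∞) → [0,1], and a probability density π on [0,1]; set μ_T = ∫₀¹∫₀¹ min(|x−y|,1−|x−y|)² π(x)π(y) dx dy. For each d, let X₁, …, X_n be i.i.d. points in [0,1]^d whose d coordinates are i.i.d. with density π, let r₀(d) = √(k d) + o(√d), and let G_d be the soft random geometric graph in which each edge (i,j) is included independently with probability p(ρ_T(X_i,X_j)/r₀(d)) given the positions, where ρ_T is the d-dimensional torus distance. Then for every labelled graph g on n vertices with edge-indicator values x_{ij}, P(G_d = g) → Π_{i<j} p_k^{x_{ij}} (1−p_k)^{1−x_{ij}} as d → ∞, where p_k = p(√(μ_T/k)); i.e. the soft ensemble converges in distribution to the Erdős–Rényi ensemble G(n, p_k). -/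

import Mathlib

open MeasureTheory ProbabilityTheory Filter Topology Asymptotics

/-- The uniform probability measure on `[0,1]`. -/
noncomputable def unif01 : Measure ℝ := volume.restrict (Set.Icc (0:ℝ) 1)

/-- The distance on the one-dimensional unit torus. -/
noncomputable def rhoT (x y : ℝ) : ℝ := min |x - y| (1 - |x - y|)

/-- The distance on the `d`-dimensional unit torus. -/
noncomputable def torusDist (d : ℕ) (x y : Fin d → ℝ) : ℝ :=
  Real.sqrt (∑ k : Fin d, (min |x k - y k| (1 - |x k - y k|)) ^ 2)

/-- Index type of (unordered) pairs `i < j` of nodes. -/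
abbrev Pairs (n : ℕ) := {p : Fin n × Fin n // p.1 < p.2}

/-- The measure on `[0,1]` with density `π` with respect to Lebesgue measure. -/
noncomputable def densityMeasure (π : ℝ → ℝ) : Measure ℝ :=
  (volume.restrict (Set.Icc (0:ℝ) 1)).withDensity fun x => ENNReal.ofReal (π x)

/-- The law of `n` points in `[0,1]^d` whose `n·d` coordinates are i.i.d. with density `π`,
together with an independent i.i.d. family of uniform `[0,1]` variables, one per pair of
nodes, used to decide the soft edges. -/
noncomputable def softLaw (π : ℝ → ℝ) (n d : ℕ) :
    Measure ((Fin n → Fin d → ℝ) × (Pairs n → ℝ)) :=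
  (Measure.pi fun _ : Fin n => Measure.pi fun _ : Fin d => densityMeasure π).prod
    (Measure.pi fun _ : Pairs n => unif01)

lemma aux_prob (π : ℝ → ℝ) (hπm : Measurable π)
    (hπ0 : ∀ x ∈ Set.Icc (0:ℝ) 1, 0 ≤ π x)
    (hπ1 : ∫ x in Set.Icc (0:ℝ) 1, π x = 1) : IsProbabilityMeasure (densityMeasure π) := by
  constructor
  unfold densityMeasure
  rw [withDensity_apply _ MeasurableSet.univ, Measure.restrict_univ,
    ← ofReal_integral_eq_lintegral_ofReal]
  · rw [hπ1]; simp
  · by_contra h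
    rw [integral_undef h] at hπ1
    exact zero_ne_one hπ1
  · exact (ae_restrict_iff' measurableSet_Icc).2 (ae_of_all _ hπ0)

lemma aux_rho_meas : Measurable (fun z : ℝ × ℝ => rhoT z.1 z.2 ^ 2) := by
  unfold rhoT
  fun_prop

lemma aux_supp (π : ℝ → ℝ) : ∀ᵐ x ∂(densityMeasure π), x ∈ Set.Icc (0:ℝ) 1 :=
  (withDensity_absolutelyContinuous _ _).ae_le (ae_restrict_mem measurableSet_Icc)

lemma aux_integrable (π : ℝ → ℝ) [IsProbabilityMeasure (densityMeasure π)] :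
    Integrable (fun z : ℝ × ℝ => rhoT z.1 z.2 ^ 2)
      ((densityMeasure π).prod (densityMeasure π)) := by
  refine Integrable.of_bound aux_rho_meas.aestronglyMeasurable 1 ?_
  have h1 : ∀ᵐ z ∂((densityMeasure π).prod (densityMeasure π)), z.1 ∈ Set.Icc (0:ℝ) 1 :=
    Measure.quasiMeasurePreserving_fst.ae (aux_supp π)
  have h2 : ∀ᵐ z ∂((densityMeasure π).prod (densityMeasure π)), z.2 ∈ Set.Icc (0:ℝ) 1 :=
    Measure.quasiMeasurePreserving_snd.ae (aux_supp π)
  filter_upwards [h1, h2] with z hz1 hz2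
  rw [Real.norm_eq_abs, abs_pow, sq_abs]
  have ha : |z.1 - z.2| ≤ 1 := by
    rw [abs_le]; constructor <;> linarith [hz1.1, hz1.2, hz2.1, hz2.2]
  have h0 : 0 ≤ rhoT z.1 z.2 := le_min (abs_nonneg _) (by linarith)
  have h1' : rhoT z.1 z.2 ≤ 1 := (min_le_left _ _).trans ha
  nlinarith

lemma aux_int1 (π : ℝ → ℝ) (hπm : Measurable π)
    (hπ0 : ∀ x ∈ Set.Icc (0:ℝ) 1, 0 ≤ π x) (f : ℝ → ℝ) :
    ∫ x, f x ∂(densityMeasure π) = ∫ x in Set.Icc (0:ℝ) 1, π x * f x := by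
  unfold densityMeasure
  rw [integral_withDensity_eq_integral_toReal_smul (by fun_prop) (by simp)]
  refine setIntegral_congr_fun measurableSet_Icc fun x hx => ?_
  simp [ENNReal.toReal_ofReal (hπ0 x hx)]

lemma aux_mean (π : ℝ → ℝ) (hπm : Measurable π)
    (hπ0 : ∀ x ∈ Set.Icc (0:ℝ) 1, 0 ≤ π x) [IsProbabilityMeasure (densityMeasure π)] :
    ∫ z, rhoT z.1 z.2 ^ 2 ∂((densityMeasure π).prod (densityMeasure π)) =
      ∫ x in Set.Icc (0:ℝ) 1, ∫ y in Set.Icc (0:ℝ) 1, rhoT x y ^ 2 * (π x * π y) := by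
  rw [integral_prod _ (aux_integrable π), aux_int1 π hπm hπ0]
  refine setIntegral_congr_fun measurableSet_Icc fun x hx => ?_
  simp only
  rw [aux_int1 π hπm hπ0, ← integral_const_mul]
  congr 1; ext y; ring

/-- The big space. -/
noncomputable def bigLaw (ν : Measure ℝ) [IsProbabilityMeasure ν] (n : ℕ) :
    Measure (Fin n → ℕ → ℝ) :=
  Measure.infinitePi fun _ : Fin n => Measure.infinitePi fun _ : ℕ => ν

lemma big_restrict (ν : Measure ℝ) [IsProbabilityMeasure ν] (n d : ℕ) :
    (bigLaw ν n).map (fun ω (i : Fin n) (k : Fin d) => ω i k) =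
      Measure.pi fun _ : Fin n => Measure.pi fun _ : Fin d => ν := by
  unfold bigLaw
  have h := Measure.infinitePi_map_pi (μ := fun _ : Fin n => Measure.infinitePi fun _ : ℕ => ν)
    (f := fun (_ : Fin n) (u : ℕ → ℝ) (k : Fin d) => u k) (by fun_prop)
  have h2 := Measure.map_infinitePi_infinitePi_of_inj (P := fun _ : ℕ => ν)
    (f := fun k : Fin d => (k : ℕ)) Fin.val_injective
  rw [h]
  simp only [h2, Measure.infinitePi_eq_pi]

lemma big_indep (ν : Measure ℝ) [IsProbabilityMeasure ν] (n : ℕ) :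
    iIndepFun (fun (q : Fin n × ℕ) (ω : Fin n → ℕ → ℝ) => ω q.1 q.2) (bigLaw ν n) :=
  iIndepFun_uncurry_infinitePi' (X := fun (_ : Fin n) (_ : ℕ) (x : ℝ) => x)
    (fun (_ : Fin n) (_ : ℕ) => ν) (by fun_prop)

instance (ν : Measure ℝ) [IsProbabilityMeasure ν] (n : ℕ) : IsProbabilityMeasure (bigLaw ν n) := by
  unfold bigLaw; infer_instance

lemma big_eval (ν : Measure ℝ) [IsProbabilityMeasure ν] (n : ℕ) (i : Fin n) (k : ℕ) :
    (bigLaw ν n).map (fun ω => ω i k) = ν := by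
  unfold bigLaw
  have h1 := measurePreserving_eval_infinitePi
    (fun _ : Fin n => Measure.infinitePi fun _ : ℕ => ν) i
  have h2 := measurePreserving_eval_infinitePi (fun _ : ℕ => ν) k
  exact (h2.comp h1).map_eq

lemma big_pair (ν : Measure ℝ) [IsProbabilityMeasure ν] (n : ℕ) (i j : Fin n) (hij : i ≠ j)
    (k : ℕ) : (bigLaw ν n).map (fun ω => (ω i k, ω j k)) = ν.prod ν := by
  have h := (big_indep ν n).indepFun (i := (i, k)) (j := (j, k)) (by simp [hij])
  have hm : ∀ i : Fin n, Measurable (fun ω : Fin n → ℕ → ℝ => ω i k) := fun i => by fun_prop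
  rw [h.map_prod_eq_prod_map_map (hm i).aemeasurable (hm j).aemeasurable]
  simp only [big_eval]

lemma big_slln (ν : Measure ℝ) [IsProbabilityMeasure ν] (n : ℕ) (i j : Fin n) (hij : i ≠ j)
    (h : ℝ × ℝ → ℝ) (hm : Measurable h) (hi : Integrable h (ν.prod ν)) :
    ∀ᵐ ω ∂(bigLaw ν n), Tendsto (fun d : ℕ => (∑ k : Fin d, h (ω i k, ω j k)) / d) atTop
      (𝓝 (∫ z, h z ∂(ν.prod ν))) := by
  have hmp : ∀ k : ℕ, MeasurePreserving (fun ω : Fin n → ℕ → ℝ => (ω i k, ω j k))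
      (bigLaw ν n) (ν.prod ν) := fun k => ⟨by fun_prop, big_pair ν n i j hij k⟩
  have key := strong_law_ae_real (μ := bigLaw ν n) (fun k ω => h (ω i k, ω j k))
    ((hmp 0).integrable_comp_of_integrable hi) ?_ ?_
  · have e : ∫ ω, h (ω i 0, ω j 0) ∂(bigLaw ν n) = ∫ z, h z ∂(ν.prod ν) := by
      rw [← (hmp 0).map_eq, integral_map (hmp 0).measurable.aemeasurable
        hm.aestronglyMeasurable]
    rw [e] at key
    filter_upwards [key] with ω hω
    refine hω.congr fun d => ?_
    rw [Finset.sum_range]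
  · intro k l hkl
    have := (big_indep ν n).indepFun_prodMk_prodMk (by fun_prop) (i, k) (j, k) (i, l) (j, l)
      (by simp [hkl]) (by simp [hkl]) (by simp [hkl]) (by simp [hkl])
    exact this.comp hm hm
  · intro k
    exact IdentDistrib.comp (f := fun ω : Fin n → ℕ → ℝ => (ω i k, ω j k))
      (g := fun ω : Fin n → ℕ → ℝ => (ω i 0, ω j 0))
      ⟨by fun_prop, by fun_prop, by rw [(hmp k).map_eq, (hmp 0).map_eq]⟩ hm

instance : IsProbabilityMeasure unif01 := by
  unfold unif01
  constructor
  simp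

lemma unif_le (c : ℝ) (hc : c ∈ Set.Icc (0:ℝ) 1) (P : Prop) [Decidable P] :
    unif01 {u | u ≤ c ↔ P} = ENNReal.ofReal (if P then c else 1 - c) := by
  unfold unif01
  by_cases hP : P
  · simp only [hP, iff_true, if_true]
    rw [Measure.restrict_apply (show MeasurableSet {u : ℝ | u ≤ c} from measurableSet_Iic)]
    have : {u : ℝ | u ≤ c} ∩ Set.Icc 0 1 = Set.Icc 0 c := by
      ext u; simp only [Set.mem_inter_iff, Set.mem_setOf_eq, Set.mem_Icc]
      constructor
      · rintro ⟨a, b, _⟩; exact ⟨b, a⟩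
      · rintro ⟨a, b⟩; exact ⟨b, a, b.trans hc.2⟩
    rw [this, Real.volume_Icc, sub_zero]
  · simp only [hP, iff_false, if_false, not_le]
    rw [Measure.restrict_apply (show MeasurableSet {u : ℝ | c < u} from measurableSet_Ioi)]
    have : {u : ℝ | c < u} ∩ Set.Icc 0 1 = Set.Ioc c 1 := by
      ext u; simp only [Set.mem_inter_iff, Set.mem_setOf_eq, Set.mem_Icc, Set.mem_Ioc]
      constructor
      · rintro ⟨a, _, b⟩; exact ⟨a, b⟩
      · rintro ⟨a, b⟩; exact ⟨a, hc.1.trans a.le, b⟩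
    rw [this, Real.volume_Ioc]

lemma torus_meas (d : ℕ) : Measurable (fun z : (Fin d → ℝ) × (Fin d → ℝ) =>
    torusDist d z.1 z.2) := by
  unfold torusDist
  fun_prop

lemma prob_eq {Ω ι : Type*} [MeasurableSpace Ω] [Fintype ι] (μ : Measure Ω)
    [IsProbabilityMeasure μ] (c : ι → Ω → ℝ) (hc : ∀ q, Measurable (c q))
    (hc01 : ∀ q ω, c q ω ∈ Set.Icc (0:ℝ) 1) (A : ι → Prop) [DecidablePred A] :
    ((μ.prod (Measure.pi fun _ : ι => unif01)) {ω | ∀ q, (ω.2 q ≤ c q ω.1 ↔ A q)}).toReal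
      = ∫ x, ∏ q, (if A q then c q x else 1 - c q x) ∂μ := by
  have hnn : ∀ q x, 0 ≤ (if A q then c q x else 1 - c q x) := by
    intro q x
    split_ifs
    · exact (hc01 q x).1
    · linarith [(hc01 q x).2]
  rw [integral_eq_lintegral_of_nonneg_ae
    (ae_of_all _ fun x => Finset.prod_nonneg fun q _ => hnn q x)]
  · rw [Measure.prod_apply]
    · congr 1
      refine lintegral_congr fun x => ?_
      have : Prod.mk x ⁻¹' {ω : Ω × (ι → ℝ) | ∀ q, (ω.2 q ≤ c q ω.1 ↔ A q)} =
          Set.univ.pi fun q => {u | u ≤ c q x ↔ A q} := by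
        ext u; simp
      rw [this, Measure.pi_pi, ENNReal.ofReal_prod_of_nonneg fun q _ => hnn q x]
      exact Finset.prod_congr rfl fun q _ => unif_le _ (hc01 q x) _
    · rw [Set.ofPred_forall]
      refine MeasurableSet.iInter fun q => ?_
      have : MeasurableSet {ω : Ω × (ι → ℝ) | ω.2 q ≤ c q ω.1} :=
        measurableSet_le (by fun_prop) (by fun_prop)
      by_cases hA : A q
      · simpa [hA] using this
      · have h2 : MeasurableSet {ω : Ω × (ι → ℝ) | c q ω.1 < ω.2 q} :=
          measurableSet_lt (by fun_prop) (by fun_prop)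
        simpa [hA] using h2
  · refine (Finset.measurable_prod _ fun q _ => ?_).aestronglyMeasurable
    split_ifs
    · exact hc q
    · exact measurable_const.sub (hc q)

lemma r0_lim (k : ℝ) (hk : 0 < k) (r₀ : ℕ → ℝ)
    (hr₀ : (fun d : ℕ => r₀ d - Real.sqrt (k * d)) =o[atTop] fun d : ℕ => Real.sqrt d) :
    Tendsto (fun d : ℕ => r₀ d / Real.sqrt d) atTop (𝓝 (Real.sqrt k)) := by
  have h := hr₀.tendsto_div_nhds_zero.add_const (Real.sqrt k)
  rw [zero_add] at h
  refine h.congr' ?_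
  filter_upwards [eventually_gt_atTop 0] with d hd
  have : 0 < Real.sqrt d := Real.sqrt_pos.2 (by exact_mod_cast hd)
  rw [Real.sqrt_mul hk.le]
  field_simp
  ring

lemma ratio_lim (k : ℝ) (hk : 0 < k) (r₀ : ℕ → ℝ)
    (hr₀ : (fun d : ℕ => r₀ d - Real.sqrt (k * d)) =o[atTop] fun d : ℕ => Real.sqrt d)
    (S : ℕ → ℝ) (m : ℝ) (hS : Tendsto (fun d : ℕ => S d / d) atTop (𝓝 m)) :
    Tendsto (fun d : ℕ => Real.sqrt (S d) / r₀ d) atTop (𝓝 (Real.sqrt (m / k))) := by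
  have h := ((Real.continuous_sqrt.tendsto _).comp hS).div (r0_lim k hk r₀ hr₀)
    (Real.sqrt_pos.2 hk).ne'
  rw [Real.sqrt_div' _ hk.le]
  refine h.congr' ?_
  filter_upwards [eventually_gt_atTop 0] with d hd
  have : 0 < Real.sqrt d := Real.sqrt_pos.2 (by exact_mod_cast hd)
  simp only [Function.comp, Pi.div_apply]
  rw [Real.sqrt_div' _ (by positivity)]
  field_simp

/-- Soft RGGs on the `d`-dimensional torus with i.i.d. coordinate density `π`, continuous
non-increasing connection function `p`, and connection range `r₀(d) = √(kd) + o(√d)`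
converge in distribution to the Erdős–Rényi ensemble `G(n, p_k)`, `p_k = p(√(μ_T/k))`. -/
theorem stmt_15 (n : ℕ) (hn : 2 ≤ n) (k : ℝ) (hk : 0 < k)
    (p : ℝ → ℝ) (hpc : ContinuousOn p (Set.Ici 0))
    (hpa : AntitoneOn p (Set.Ici 0))
    (hp01 : ∀ x : ℝ, 0 ≤ x → p x ∈ Set.Icc (0:ℝ) 1)
    (π : ℝ → ℝ) (hπm : Measurable π)
    (hπ0 : ∀ x ∈ Set.Icc (0:ℝ) 1, 0 ≤ π x)
    (hπ1 : ∫ x in Set.Icc (0:ℝ) 1, π x = 1)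
    (μT : ℝ)
    (hμT : μT = ∫ x in Set.Icc (0:ℝ) 1, ∫ y in Set.Icc (0:ℝ) 1, rhoT x y ^ 2 * (π x * π y))
    (r₀ : ℕ → ℝ) (hpos : ∀ d, 0 < r₀ d)
    (hr₀ : (fun d : ℕ => r₀ d - Real.sqrt (k * d)) =o[atTop] fun d : ℕ => Real.sqrt d)
    (g : SimpleGraph (Fin n)) [DecidableRel g.Adj] :
    Tendsto
      (fun d : ℕ =>
        (softLaw π n d {ω | ∀ q : Pairs n,
            (ω.2 q ≤ p (torusDist d (ω.1 q.1.1) (ω.1 q.1.2) / r₀ d) ↔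
              g.Adj q.1.1 q.1.2)}).toReal)
      atTop
      (𝓝 (∏ q : Pairs n,
        if g.Adj q.1.1 q.1.2 then p (Real.sqrt (μT / k)) else 1 - p (Real.sqrt (μT / k)))) := by
  have hν := aux_prob π hπm hπ0 hπ1
  set ν := densityMeasure π with hνdef
  set P : ℝ → ℝ := fun x => p (max 0 x) with hP
  have hPc : Continuous P := by
    exact hpc.comp_continuous (by fun_prop) (fun x => Set.mem_Ici.2 (le_max_left _ _))
  have hP01 : ∀ x, P x ∈ Set.Icc (0:ℝ) 1 := fun x => hp01 _ (le_max_left _ _)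
  have hPp : ∀ x, 0 ≤ x → p x = P x := fun x hx => by simp [hP, max_eq_right hx]
  have hTn : ∀ d x y, p (torusDist d x y / r₀ d) = P (torusDist d x y / r₀ d) :=
    fun d x y => hPp _ (div_nonneg (Real.sqrt_nonneg _) (hpos d).le)
  simp only [hTn]
  rw [hPp _ (Real.sqrt_nonneg _)]
  have hcm : ∀ d (q : Pairs n), Measurable (fun x : Fin n → Fin d → ℝ =>
      P (torusDist d (x q.1.1) (x q.1.2) / r₀ d)) := by
    intro d q
    have h1 : Measurable (fun x : Fin n → Fin d → ℝ => (x q.1.1, x q.1.2)) := by fun_prop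
    exact hPc.measurable.comp (((torus_meas d).comp h1).div_const _)
  have hFm : ∀ d, Measurable (fun x : Fin n → Fin d → ℝ => ∏ q : Pairs n,
      (if g.Adj q.1.1 q.1.2 then P (torusDist d (x q.1.1) (x q.1.2) / r₀ d) else
        1 - P (torusDist d (x q.1.1) (x q.1.2) / r₀ d))) := by
    intro d
    refine Finset.measurable_prod _ fun q _ => ?_
    split_ifs
    · exact hcm d q
    · exact measurable_const.sub (hcm d q)
  have hr : ∀ d : ℕ, Measurable
      (fun (ω : Fin n → ℕ → ℝ) (i : Fin n) (k : Fin d) => ω i k) := by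
    intro d
    fun_prop
  have step : ∀ d : ℕ, (softLaw π n d {ω | ∀ q : Pairs n,
            (ω.2 q ≤ P (torusDist d (ω.1 q.1.1) (ω.1 q.1.2) / r₀ d) ↔
              g.Adj q.1.1 q.1.2)}).toReal =
      ∫ ω, ∏ q : Pairs n, (if g.Adj q.1.1 q.1.2 then
          P (torusDist d (fun k => ω q.1.1 k) (fun k => ω q.1.2 k) / r₀ d) else
          1 - P (torusDist d (fun k => ω q.1.1 k) (fun k => ω q.1.2 k) / r₀ d))
        ∂(bigLaw ν n) := by
    intro d
    unfold softLaw
    rw [prob_eq _ (fun (q : Pairs n) (x : Fin n → Fin d → ℝ) =>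
      P (torusDist d (x q.1.1) (x q.1.2) / r₀ d)) (hcm d) (fun q x => hP01 _)
      (fun q : Pairs n => g.Adj q.1.1 q.1.2), ← hνdef, ← big_restrict ν n d,
      integral_map (hr d).aemeasurable (hFm d).aestronglyMeasurable]
  simp only [step]
  have hconst : ∀ c : ℝ, c = ∫ _, c ∂(bigLaw ν n) := fun c => by simp
  rw [hconst (∏ q : Pairs n, _)]
  refine tendsto_integral_of_dominated_convergence (fun _ => (1:ℝ)) ?_ (integrable_const _) ?_ ?_
  · intro d
    exact ((hFm d).comp (hr d)).aestronglyMeasurable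
  · intro d
    refine ae_of_all _ fun ω => ?_
    rw [Real.norm_eq_abs, Finset.abs_prod]
    refine Finset.prod_le_one (fun _ _ => abs_nonneg _) fun q _ => ?_
    have := hP01 (torusDist d (fun k => ω q.1.1 k) (fun k => ω q.1.2 k) / r₀ d)
    rw [abs_le]
    split_ifs <;> constructor <;> linarith [this.1, this.2]
  · have hall : ∀ᵐ ω ∂(bigLaw ν n), ∀ q : Pairs n,
        Tendsto (fun d : ℕ => (∑ k : Fin d, rhoT (ω q.1.1 k) (ω q.1.2 k) ^ 2) / d) atTop
          (𝓝 μT) := by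
      rw [ae_all_iff]
      intro q
      have := big_slln ν n q.1.1 q.1.2 q.2.ne _ aux_rho_meas (aux_integrable π)
      rwa [aux_mean π hπm hπ0, ← hμT] at this
    filter_upwards [hall] with ω hω
    refine tendsto_finsetProd _ fun q _ => ?_
    have hl : Tendsto (fun d : ℕ =>
        P (torusDist d (fun k => ω q.1.1 k) (fun k => ω q.1.2 k) / r₀ d)) atTop
        (𝓝 (P (Real.sqrt (μT / k)))) :=
      (hPc.tendsto _).comp (ratio_lim k hk r₀ hr₀ _ μT (hω q))
    split_ifs
    · exact hl
    · exact hl.const_sub 1
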